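/- Let (X,d) be a compact metric space and f: X → ℝ a Lipschitz function. Then for every (x,t) ∈ X × (0,∞) the slope of Q_t f satisfies |D Q_t f|(x) ≤ D⁺(x,t)/t. -/

import Mathlib

open Filter Topology Set MeasureTheory
open scoped ENNReal NNReal

/-- Hopf-Lax semigroup: `Q_t f (x) = inf_y ( f y + d(x,y)^2 / (2t) )`, with `Q_0 f = f`. -/
noncomputable def HL {X : Type*} [MetricSpace X] (f : X → ℝ) (t : ℝ) (x : X) : ℝ :=
  if t = 0 then f x else ⨅ y : X, (f y + dist x y ^ 2 / (2 * t))

/-- The set of minimizers of `y ↦ f y + d(x,y)^2/(2t)`. -/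
def minSet {X : Type*} [MetricSpace X] (f : X → ℝ) (t : ℝ) (x : X) : Set X :=
  {y | ∀ z : X, f y + dist x y ^ 2 / (2 * t) ≤ f z + dist x z ^ 2 / (2 * t)}

/-- `D⁺(x,t)`: the largest distance from `x` to a minimizer of `y ↦ f y + d(x,y)^2/(2t)`,
with `D⁺(x,0) = 0`. -/
noncomputable def Dplus {X : Type*} [MetricSpace X] (f : X → ℝ) (x : X) (t : ℝ) : ℝ :=
  if t = 0 then 0 else sSup (dist x '' minSet f t x)

/-- `D⁻(x,t)`: the smallest distance from `x` to a minimizer of `y ↦ f y + d(x,y)^2/(2t)`,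
with `D⁻(x,0) = 0`. -/
noncomputable def Dminus {X : Type*} [MetricSpace X] (f : X → ℝ) (x : X) (t : ℝ) : ℝ :=
  if t = 0 then 0 else sInf (dist x '' minSet f t x)

/-- The slope (local Lipschitz constant) of `u` at `x`:
`|Du|(x) = limsup_{y→x} |u y - u x| / d(y,x)` (this `Real`-valued `limsup` is `0` at isolated
points, where the punctured neighborhood filter is trivial). -/
noncomputable def locSlope {X : Type*} [MetricSpace X] (u : X → ℝ) (x : X) : ℝ :=
  limsup (fun y => |u y - u x| / dist y x) (𝓝[≠] x)

/-!
Let `z` minimize `F(t, x, ·)`, where `F(t, x, z) = f z + d(x,z)²/(2t)`. Testing `Q_t f y` with `z`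
and expanding `d(y,z)² ≤ (d(x,z) + d(y,x))²` gives
`Q_t f y - Q_t f x ≤ d(y,x)/t * (D⁺(x,t) + d(y,x)/2)`, and exchanging `x` and `y` bounds the
opposite increment with `D⁺(y,t)` in place of `D⁺(x,t)`. The latter is harmless in the limit
because `D⁺(·,t)` is upper semicontinuous: the minimizers have closed graph and, by coercivity of
`F`, those of nearby points stay in one compact set.
-/

section General

open Bornology

lemma exists_forall_le_of_lowerSemicontinuous {Y β : Type*} [TopologicalSpace Y] [Nonempty Y]
    [LinearOrder β] {g : Y → β} (hg : LowerSemicontinuous g)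
    (hlim : Tendsto g (cocompact Y) atTop) : ∃ y, ∀ z, g y ≤ g z := by
  obtain ⟨y₀⟩ := ‹Nonempty Y›
  obtain ⟨K, hK, hfar⟩ := mem_cocompact.1 (hlim.eventually_ge_atTop (g y₀))
  obtain ⟨y, -, hy⟩ := (hg.lowerSemicontinuousOn (insert y₀ K)).exists_isMinOn
    (insert_nonempty y₀ K) (hK.insert y₀)
  refine ⟨y, fun z => ?_⟩
  by_cases hz : z ∈ K
  · exact hy (mem_insert_of_mem y₀ hz)
  · exact (hy (mem_insert y₀ K)).trans (hfar hz)

lemma upperHemicontinuousAt_of_isClosed_graph {Y Z : Type*} [TopologicalSpace Y]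
    [TopologicalSpace Z] {F : Y → Set Z} {x : Y} {K : Set Z}
    (hF : IsClosed {p : Y × Z | p.2 ∈ F p.1}) (hK : IsCompact K) (hFK : ∀ᶠ y in 𝓝 x, F y ⊆ K) :
    UpperHemicontinuousAt F x := by
  refine upperHemicontinuousAt_iff_forall_isOpen.2 fun u hu hxu => ?_
  have hout : ∀ᶠ y in 𝓝 x, ∀ z ∈ K \ u, z ∉ F y :=
    (hK.diff hu).eventually_forall_of_forall_eventually fun z hz =>
      hF.isOpen_compl.mem_nhds fun hzx => hz.2 (hxu hzx)
  filter_upwards [hFK, hout] with y hyK hy z hz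
  by_contra hzu
  exact hy z ⟨hyK hz, hzu⟩ hz

lemma tendsto_dist_nhds_prod_cobounded {X : Type*} [PseudoMetricSpace X] (x : X) :
    Tendsto (fun p : X × X => dist p.1 p.2) (𝓝 x ×ˢ cobounded X) atTop := by
  have hnear : Tendsto (fun p : X × X => -dist x p.1) (𝓝 x ×ˢ cobounded X) (𝓝 (-dist x x)) :=
    (tendsto_const_nhds.dist tendsto_fst).neg
  refine tendsto_atTop_mono (fun p => ?_)
    (((Metric.tendsto_dist_left_cobounded_atTop x).comp tendsto_snd).atTop_add hnear)
  simp only [Function.comp_apply]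
  linarith [dist_triangle x p.1 p.2]

lemma locSlope_le {X : Type*} [MetricSpace X] {u : X → ℝ} {x : X} {a : ℝ} (ha : 0 ≤ a)
    (h : ∀ᶠ y in 𝓝[≠] x, |u y - u x| / dist y x ≤ a) : locSlope u x ≤ a := by
  rcases (𝓝[≠] x).eq_or_neBot with hbot | _
  · simpa [locSlope, hbot, limsup_eq] using ha
  · have hbdd : IsBoundedUnder (· ≥ ·) (𝓝[≠] x) fun y => |u y - u x| / dist y x :=
      isBoundedUnder_of ⟨0, fun y => by positivity⟩
    exact limsup_le_of_le hbdd.isCoboundedUnder_le h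

end General

section HopfLax

open Bornology

variable {X : Type*} [MetricSpace X] {f : X → ℝ} {t T : ℝ} {x y z x₀ : X}

/-- The functional `F(t, x, y) = f y + d(x,y)²/(2t)`, whose infimum over `y` is `Q_t f x` for
`t ≠ 0` and whose minimizers form `minSet f t x`. -/
noncomputable def hopfLaxCost (f : X → ℝ) (t : ℝ) (x y : X) : ℝ :=
  f y + dist x y ^ 2 / (2 * t)

lemma hopfLaxCost_sub_le (ht : 0 < t) :
    hopfLaxCost f t y z - hopfLaxCost f t x z ≤ dist y x / t * (dist x z + dist y x / 2) :=
  calc hopfLaxCost f t y z - hopfLaxCost f t x z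
      = (dist y z ^ 2 - dist x z ^ 2) / (2 * t) := by simp only [hopfLaxCost]; ring
    _ ≤ ((dist y x + dist x z) ^ 2 - dist x z ^ 2) / (2 * t) := by
        gcongr
        exact dist_triangle y x z
    _ = dist y x / t * (dist x z + dist y x / 2) := by ring

lemma lowerSemicontinuous_hopfLaxCost (hf : LowerSemicontinuous f) (x : X) :
    LowerSemicontinuous (hopfLaxCost f t x) :=
  hf.add (Continuous.lowerSemicontinuous (by fun_prop))

lemma continuous_hopfLaxCost (hf : Continuous f) (x : X) : Continuous (hopfLaxCost f t x) := by
  unfold hopfLaxCost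
  fun_prop

lemma isClosed_setOf_mem_minSet (hf : LowerSemicontinuous f) :
    IsClosed {p : X × X | p.2 ∈ minSet f t p.1} := by
  have hrw : {p : X × X | p.2 ∈ minSet f t p.1} = ⋂ w, {p : X × X |
      f p.2 + (dist p.1 p.2 ^ 2 / (2 * t) - dist p.1 w ^ 2 / (2 * t)) ≤ f w} := by
    ext p
    simp only [minSet, mem_ofPred_eq, mem_iInter, ← add_sub_assoc, sub_le_iff_le_add]
  rw [hrw]
  exact isClosed_iInter fun w => ((hf.comp continuous_snd).add
    (Continuous.lowerSemicontinuous (by fun_prop))).isClosed_preimage (f w)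

lemma HL_eq_of_mem_minSet (ht : t ≠ 0) (hz : z ∈ minSet f t x) :
    HL f t x = hopfLaxCost f t x z := by
  have : Nonempty X := ⟨x⟩
  rw [HL, if_neg ht]
  exact le_antisymm (ciInf_le ⟨_, forall_mem_range.2 hz⟩ z) (le_ciInf hz)

lemma HL_le_hopfLaxCost (ht : t ≠ 0) (hx : (minSet f t x).Nonempty) (z : X) :
    HL f t x ≤ hopfLaxCost f t x z := by
  obtain ⟨w, hw⟩ := hx
  exact (HL_eq_of_mem_minSet ht hw).trans_le (hw z)

lemma Dplus_nonneg : 0 ≤ Dplus f x t := by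
  rw [Dplus]
  split_ifs
  · exact le_rfl
  · exact Real.sSup_nonneg (forall_mem_image.2 fun _ _ => dist_nonneg)

lemma dist_le_Dplus (ht : t ≠ 0) (hb : IsBounded (minSet f t x)) (hz : z ∈ minSet f t x) :
    dist x z ≤ Dplus f x t := by
  rw [Dplus, if_neg ht]
  obtain ⟨r, hr⟩ := (Metric.isBounded_iff_subset_closedBall x).1 hb
  refine le_csSup ⟨r, forall_mem_image.2 fun w hw => ?_⟩ (mem_image_of_mem _ hz)
  exact Metric.mem_closedBall'.1 (hr hw)

lemma Dplus_le {r : ℝ} (hr : 0 ≤ r) (h : ∀ z ∈ minSet f t x, dist x z ≤ r) : Dplus f x t ≤ r := by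
  rw [Dplus]
  split_ifs
  · exact hr
  · exact Real.sSup_le (forall_mem_image.2 h) hr

lemma HL_sub_le (ht : 0 < t) (hx : (minSet f t x).Nonempty) (hb : IsBounded (minSet f t x))
    (hy : (minSet f t y).Nonempty) :
    HL f t y - HL f t x ≤ dist y x / t * (Dplus f x t + dist y x / 2) := by
  obtain ⟨z, hz⟩ := hx
  calc HL f t y - HL f t x
      ≤ hopfLaxCost f t y z - hopfLaxCost f t x z := by
        rw [HL_eq_of_mem_minSet ht.ne' hz]
        gcongr
        exact HL_le_hopfLaxCost ht.ne' hy z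
    _ ≤ dist y x / t * (dist x z + dist y x / 2) := hopfLaxCost_sub_le ht
    _ ≤ dist y x / t * (Dplus f x t + dist y x / 2) := by
        gcongr
        exact dist_le_Dplus ht.ne' hb hz

/-- Coercivity of `F(t, y, z)` in `z`, locally uniformly in `y`. In a proper space it makes
minimizers exist and stay in a compact set as `y` varies near a point. -/
def HopfLaxCoercive (f : X → ℝ) (t : ℝ) : Prop :=
  ∀ x, Tendsto (fun p : X × X => hopfLaxCost f t p.1 p.2) (𝓝 x ×ˢ cobounded X) atTop

lemma hopfLaxCoercive_of_bddBelow (ht : 0 < t) (htT : t < T)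
    (hb : BddBelow (range (hopfLaxCost f T x₀))) : HopfLaxCoercive f t := by
  intro x
  obtain ⟨m, hm⟩ := hb
  have hT : 0 < T := ht.trans htT
  set c : ℝ := (1 / t - 1 / T) / 2 with hc
  have hc_pos : 0 < c := half_pos (sub_pos.2 (one_div_lt_one_div_of_lt ht htT))
  -- The bound on `f` costs at most `(d(x₀,y) + d(y,z))²/(2T)`, which `d(y,z)²/(2t)` outgrows.
  have hlower : ∀ p : X × X, dist p.1 p.2 * (c * dist p.1 p.2 + -(dist x₀ p.1 / T)) +
      (m - dist x₀ p.1 ^ 2 / (2 * T)) ≤ hopfLaxCost f t p.1 p.2 := fun p =>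
    calc dist p.1 p.2 * (c * dist p.1 p.2 + -(dist x₀ p.1 / T)) + (m - dist x₀ p.1 ^ 2 / (2 * T))
        = m - (dist x₀ p.1 + dist p.1 p.2) ^ 2 / (2 * T) + dist p.1 p.2 ^ 2 / (2 * t) := by
          rw [hc]; ring
      _ ≤ m - dist x₀ p.2 ^ 2 / (2 * T) + dist p.1 p.2 ^ 2 / (2 * t) := by
          gcongr
          exact dist_triangle x₀ p.1 p.2
      _ ≤ f p.2 + dist p.1 p.2 ^ 2 / (2 * t) := by
          gcongr
          exact sub_le_iff_le_add.2 (hm (mem_range_self p.2))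
  have hdist := tendsto_dist_nhds_prod_cobounded x
  have hbase : Tendsto (fun p : X × X => dist x₀ p.1) (𝓝 x ×ˢ cobounded X) (𝓝 (dist x₀ x)) :=
    tendsto_const_nhds.dist tendsto_fst
  exact tendsto_atTop_mono hlower
    ((hdist.atTop_mul_atTop₀ ((hdist.const_mul_atTop hc_pos).atTop_add
      (hbase.div_const T).neg)).atTop_add
        (tendsto_const_nhds.sub ((hbase.pow 2).div_const (2 * T))))

namespace HopfLaxCoercive

lemma tendsto_cobounded (hc : HopfLaxCoercive f t) (x : X) :
    Tendsto (hopfLaxCost f t x) (cobounded X) atTop :=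
  (hc x).comp (tendsto_const_nhds.prodMk tendsto_id)

lemma eventually_notMem_minSet (hc : HopfLaxCoercive f t) (x : X) :
    ∀ᶠ p in 𝓝 x ×ˢ cobounded X, p.2 ∉ minSet f t p.1 := by
  have hdiag : ∀ᶠ y in 𝓝 x, hopfLaxCost f t y x < hopfLaxCost f t x x + 1 := by
    have hcont : Continuous fun y => hopfLaxCost f t y x := by
      unfold hopfLaxCost
      fun_prop
    exact hcont.continuousAt.eventually_lt_const (lt_add_one _)
  filter_upwards [(hc x).eventually_ge_atTop (hopfLaxCost f t x x + 1),
    hdiag.prod_inl (cobounded X)] with p hfar hnear hp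
  exact (hnear.trans_le hfar).not_ge (hp x)

lemma isBounded_minSet (hc : HopfLaxCoercive f t) (x : X) : IsBounded (minSet f t x) := by
  have hfar : ∀ᶠ z in cobounded X, z ∉ minSet f t x :=
    (tendsto_const_nhds.prodMk tendsto_id).eventually (hc.eventually_notMem_minSet x)
  exact isBounded_def.2 hfar

variable [ProperSpace X]

lemma minSet_nonempty (hc : HopfLaxCoercive f t) (hf : LowerSemicontinuous f) (x : X) :
    (minSet f t x).Nonempty :=
  have : Nonempty X := ⟨x⟩
  exists_forall_le_of_lowerSemicontinuous (lowerSemicontinuous_hopfLaxCost hf x)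
    (Metric.cobounded_eq_cocompact (α := X) ▸ hc.tendsto_cobounded x)

lemma upperHemicontinuousAt_minSet (hc : HopfLaxCoercive f t) (hf : LowerSemicontinuous f)
    (x : X) : UpperHemicontinuousAt (minSet f t) x := by
  obtain ⟨p, hp, q, hq, hpq⟩ := eventually_prod_iff.1 (hc.eventually_notMem_minSet x)
  rw [Metric.cobounded_eq_cocompact] at hq
  obtain ⟨K, hK, hKq⟩ := mem_cocompact.1 hq
  refine upperHemicontinuousAt_of_isClosed_graph (isClosed_setOf_mem_minSet hf) hK ?_
  filter_upwards [hp] with y hy z hz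
  by_contra hzK
  exact hpq hy (hKq hzK) hz

lemma upperSemicontinuous_Dplus (hc : HopfLaxCoercive f t) (hf : LowerSemicontinuous f)
    (ht : t ≠ 0) : UpperSemicontinuous fun x => Dplus f x t := by
  intro x r hr
  obtain ⟨s, hs, hsr⟩ := exists_between hr
  obtain ⟨s', hs', hss'⟩ := exists_between hsr
  have hball : ∀ᶠ y in 𝓝 x, minSet f t y ⊆ Metric.ball x s :=
    upperHemicontinuousAt_iff_forall_isOpen.1 (hc.upperHemicontinuousAt_minSet hf x) _
      Metric.isOpen_ball fun z hz =>
        Metric.mem_ball'.2 ((dist_le_Dplus ht (hc.isBounded_minSet x) hz).trans_lt hs)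
  filter_upwards [hball, Metric.ball_mem_nhds x (sub_pos.2 hs')] with y hy hyx
  refine (Dplus_le (Dplus_nonneg.trans (hs.trans hs').le) fun z hz => ?_).trans_lt hss'
  linarith [dist_triangle y x z, Metric.mem_ball.1 hyx, Metric.mem_ball'.1 (hy hz)]

lemma eventually_abs_HL_sub_div_le (hc : HopfLaxCoercive f t) (hf : LowerSemicontinuous f)
    (ht : 0 < t) {r : ℝ} (hr : Dplus f x t < r) :
    ∀ᶠ y in 𝓝[≠] x, |HL f t y - HL f t x| / dist y x ≤ r / t := by
  obtain ⟨s, hs, hsr⟩ := exists_between hr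
  have hincr : ∀ y z, HL f t z - HL f t y ≤ dist z y / t * (Dplus f y t + dist z y / 2) :=
    fun y z => HL_sub_le ht (hc.minSet_nonempty hf y) (hc.isBounded_minSet y)
      (hc.minSet_nonempty hf z)
  filter_upwards [nhdsWithin_le_nhds (hc.upperSemicontinuous_Dplus hf ht.ne' x s hs),
    nhdsWithin_le_nhds (Metric.ball_mem_nhds x (sub_pos.2 hsr)), self_mem_nhdsWithin]
    with y hDy hyx hne
  have hbound : ∀ D < s, dist y x / t * (D + dist y x / 2) ≤ r / t * dist y x := fun D hD =>
    calc dist y x / t * (D + dist y x / 2)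
        ≤ dist y x / t * r := by
          gcongr
          linarith [Metric.mem_ball.1 hyx, dist_nonneg (x := y) (y := x)]
      _ = r / t * dist y x := by ring
  rw [div_le_iff₀ (dist_pos.2 hne), abs_sub_le_iff]
  exact ⟨(hincr x y).trans (hbound _ hs), (hincr y x).trans (dist_comm y x ▸ hbound _ hDy)⟩

lemma locSlope_HL_le (hc : HopfLaxCoercive f t) (hf : LowerSemicontinuous f) (ht : 0 < t) (x : X) :
    locSlope (HL f t) x ≤ Dplus f x t / t := by
  rw [le_div_iff₀ ht]
  refine le_of_forall_gt_imp_ge_of_dense fun r hr => ?_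
  rw [← le_div_iff₀ ht]
  exact locSlope_le (div_nonneg (Dplus_nonneg.trans hr.le) ht.le)
    (hc.eventually_abs_HL_sub_div_le hf ht hr)

end HopfLaxCoercive

end HopfLax

theorem stmt3_general {X : Type*} [MetricSpace X] [ProperSpace X] {f : X → ℝ}
    (hf : LowerSemicontinuous f) {t T : ℝ} (ht : 0 < t) (htT : t < T) {x₀ : X}
    (hb : BddBelow (range (hopfLaxCost f T x₀))) (x : X) :
    locSlope (HL f t) x ≤ Dplus f x t / t :=
  (hopfLaxCoercive_of_bddBelow ht htT hb).locSlope_HL_le hf ht x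

/-- **Bound on the local Lipschitz constant of `Q_t f`** (Proposition 3.4): for every
`(x,t) ∈ X × (0,∞)`, `|D Q_t f|(x) ≤ D⁺(x,t)/t`. -/
theorem stmt3 {X : Type*} [MetricSpace X] [CompactSpace X] [Nonempty X]
    (f : X → ℝ) (hf : ∃ K : ℝ≥0, LipschitzWith K f) :
    ∀ (x : X) (t : ℝ), 0 < t → locSlope (HL f t) x ≤ Dplus f x t / t := by
  obtain ⟨K, hK⟩ := hf
  exact fun x t ht => stmt3_general hK.continuous.lowerSemicontinuous ht (lt_add_one t)
    (isCompact_range (continuous_hopfLaxCost hK.continuous x)).bddBelow x
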